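/- Let K ⊂ ℝ² be a nondegenerate triangle with vertices A, B, C (i.e., A, B, C are affinely independent), let e be the closed segment from A to B, let |e| denote its length and |K| the (two-dimensional Lebesgue) area of K. Then for every natural number p and every real polynomial q in two variables of total degree at most p, the squared L2 norm of q over the edge e (with respect to one-dimensional arclength measure) satisfies ∫_e q² ds ≤ ((p+1)(p+2)/2) · (|e|/|K|) · ∫_K q² dA. -/

import Mathlib

open MeasureTheory

namespace TraceInv
section
open Polynomial

lemma ibp (f r : ℝ[X]) :
    ∫ x in (0:ℝ)..1, (derivative f).eval x * r.eval x =
      f.eval 1 * r.eval 1 - f.eval 0 * r.eval 0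
        - ∫ x in (0:ℝ)..1, f.eval x * (derivative r).eval x := by
  have := intervalIntegral.integral_mul_deriv_eq_deriv_mul (a := (0:ℝ)) (b := 1)
    (u := fun x => r.eval x) (u' := fun x => (derivative r).eval x)
    (v := fun x => f.eval x) (v' := fun x => (derivative f).eval x)
    (fun x _ => r.hasDerivAt x) (fun x _ => f.hasDerivAt x)
    ((derivative r).continuous.intervalIntegrable _ _)
    ((derivative f).continuous.intervalIntegrable _ _)
  simp only [mul_comm (f.eval _), mul_comm ((derivative f).eval _)]
  exact this

lemma orth_aux (n : ℕ) (k : ℕ) (hk : k ≤ n) (r : ℝ[X]) (hr : r.degree < k) :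
    ∫ x in (0:ℝ)..1, (derivative^[k] (X ^ n * (1 - X) ^ n : ℝ[X])).eval x * r.eval x = 0 := by
  induction k generalizing r with
  | zero =>
    have : r = 0 := by
      rw [← degree_eq_bot]
      simpa using hr
    simp [this]
  | succ k ih =>
    rw [Function.iterate_succ_apply', ibp]
    have h0 : (X : ℝ[X]) ∣ derivative^[k] (X ^ n * (1 - X) ^ n : ℝ[X]) :=
      (dvd_pow_self X (by omega : n - k ≠ 0)).trans
        (pow_sub_dvd_iterate_derivative_of_pow_dvd k (Dvd.intro _ rfl))
    have h1 : (1 - X : ℝ[X]) ∣ derivative^[k] (X ^ n * (1 - X) ^ n : ℝ[X]) :=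
      (dvd_pow_self (1 - X) (by omega : n - k ≠ 0)).trans
        (pow_sub_dvd_iterate_derivative_of_pow_dvd k (Dvd.intro_left _ rfl))
    have e0 : (derivative^[k] (X ^ n * (1 - X) ^ n : ℝ[X])).eval 0 = 0 := by
      obtain ⟨g, hg⟩ := h0
      rw [hg]; simp
    have e1 : (derivative^[k] (X ^ n * (1 - X) ^ n : ℝ[X])).eval 1 = 0 := by
      obtain ⟨g, hg⟩ := h1
      rw [hg]; simp
    rw [e0, e1, ih (by omega)]
    · simp
    · by_cases h : r = 0
      · simp [h]
      · have h1 := degree_derivative_lt h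
        rw [degree_eq_natDegree h] at hr h1
        have : r.natDegree < k + 1 := by exact_mod_cast hr
        refine h1.trans_le ?_
        exact_mod_cast (by omega : r.natDegree ≤ k)

/-- Shifted Legendre polynomial over the reals. -/
noncomputable def leg (n : ℕ) : ℝ[X] := (shiftedLegendre n).map (Int.castRingHom ℝ)

lemma orth (n : ℕ) (r : ℝ[X]) (hr : r.degree < n) :
    ∫ x in (0:ℝ)..1, (leg n).eval x * r.eval x = 0 := by
  have h := orth_aux n n le_rfl r hr
  have e : derivative^[n] (X ^ n * (1 - X) ^ n : ℝ[X]) = C (n.factorial : ℝ) * leg n := by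
    have := congrArg (Polynomial.map (Int.castRingHom ℝ)) (factorial_mul_shiftedLegendre_eq n)
    rw [← iterate_derivative_map] at this
    simp only [Polynomial.map_mul, Polynomial.map_pow, Polynomial.map_sub, Polynomial.map_one,
      Polynomial.map_X, Polynomial.map_natCast] at this
    rw [← this, leg]
    simp
  rw [e] at h
  simp only [eval_mul, eval_C, mul_assoc, intervalIntegral.integral_const_mul] at h
  exact (mul_eq_zero.mp h).resolve_left (by positivity)

lemma leg_zero (n : ℕ) : (leg n).eval 0 = 1 := by
  rw [← coeff_zero_eq_eval_zero, leg, coeff_map, coeff_shiftedLegendre]; simp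

lemma leg_deriv_zero (n : ℕ) : (derivative (leg n)).eval 0 = -(n * (n + 1)) := by
  rw [← coeff_zero_eq_eval_zero, coeff_derivative, leg, coeff_map, coeff_shiftedLegendre]
  simp

lemma leg_natDegree (n : ℕ) : (leg n).natDegree ≤ n :=
  natDegree_map_le.trans (natDegree_shiftedLegendre n).le

lemma repro (p : ℕ) (r : ℝ[X]) (hr : r.natDegree ≤ p) :
    ∫ x in (0:ℝ)..1, (derivative (leg (p+1))).eval x * r.eval x * (1 - x) = - r.eval 0 := by
  have h := ibp (leg (p+1)) (r * (1 - X))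
  rw [orth] at h
  · simp only [eval_mul, eval_sub, eval_one, eval_X, leg_zero, ← mul_assoc] at h
    rw [h]; simp
  · refine (degree_le_natDegree).trans_lt ?_
    have h1 : (derivative (r * (1 - X))).natDegree ≤ p := by
      refine (natDegree_derivative_le _).trans ?_
      have h2 : (1 - X : ℝ[X]).natDegree ≤ 1 := by compute_degree
      have := natDegree_mul_le (p := r) (q := 1 - X)
      omega
    exact_mod_cast Nat.lt_succ_of_le h1

lemma one_dim (p : ℕ) (r : ℝ[X]) (hr : r.natDegree ≤ p) :
    (r.eval 0) ^ 2 ≤ ((p:ℝ) + 1) * (p + 2) * ∫ x in (0:ℝ)..1, (1 - x) * (r.eval x) ^ 2 := by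
  set M : ℝ := ((p:ℝ) + 1) * (p + 2) with hM
  have hMpos : 0 < M := by positivity
  set k := derivative (leg (p+1)) with hk
  have hkd : k.natDegree ≤ p := by
    have h1 := natDegree_derivative_le (leg (p+1))
    have h2 := leg_natDegree (p+1)
    rw [hk]
    omega
  have hk0 : k.eval 0 = -M := by
    rw [hk, leg_deriv_zero]; push_cast; ring
  set a := r.eval 0 with ha
  have h1 := repro p r hr
  have h2 := repro p k hkd
  rw [← hk] at h1 h2
  rw [hk0] at h2
  have h3 : 0 ≤ ∫ x in (0:ℝ)..1, (1 - x) * (M * r.eval x + a * k.eval x) ^ 2 := by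
    apply intervalIntegral.integral_nonneg (by norm_num)
    intro x hx
    exact mul_nonneg (by linarith [hx.2]) (sq_nonneg _)
  have h4 : ∫ x in (0:ℝ)..1, (1 - x) * (M * r.eval x + a * k.eval x) ^ 2 =
      M ^ 2 * (∫ x in (0:ℝ)..1, (1 - x) * (r.eval x) ^ 2)
      + 2 * M * a * (∫ x in (0:ℝ)..1, k.eval x * r.eval x * (1 - x))
      + a ^ 2 * (∫ x in (0:ℝ)..1, k.eval x * k.eval x * (1 - x)) := by
    have cr := r.continuous
    have ck := k.continuous
    rw [← intervalIntegral.integral_const_mul, ← intervalIntegral.integral_const_mul,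
      ← intervalIntegral.integral_const_mul, ← intervalIntegral.integral_add,
      ← intervalIntegral.integral_add]
    · congr 1; ext x; ring
    all_goals exact Continuous.intervalIntegrable (by fun_prop) _ _
  rw [h4, h1, h2] at h3
  have : 0 ≤ M * (M * (∫ x in (0:ℝ)..1, (1 - x) * (r.eval x) ^ 2) - a ^ 2) := by
    rw [← ha] at h3
    nlinarith
  have := nonneg_of_mul_nonneg_right this hMpos
  linarith

end


/-- Reference triangle. -/
def T : Set (ℝ × ℝ) := {z | 0 ≤ z.1 ∧ 0 ≤ z.2 ∧ z.1 + z.2 ≤ 1}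

lemma T_closed : IsClosed T := by
  apply IsClosed.and (isClosed_le (by fun_prop) (by fun_prop))
  exact IsClosed.and (isClosed_le (by fun_prop) (by fun_prop))
    (isClosed_le (by fun_prop) (by fun_prop))

lemma T_compact : IsCompact T := by
  refine (isCompact_Icc (a := ((0:ℝ),(0:ℝ))) (b := (1,1))).of_isClosed_subset T_closed ?_
  rintro ⟨a, b⟩ ⟨h1, h2, h3⟩
  simp only at h1 h2 h3
  exact ⟨⟨h1, h2⟩, ⟨by simp; linarith, by simp; linarith⟩⟩

lemma T_convex : Convex ℝ T := by
  rintro ⟨a, b⟩ ⟨h1, h2, h3⟩ ⟨c, d⟩ ⟨h4, h5, h6⟩ s t hs ht hst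
  simp only at h1 h2 h3 h4 h5 h6
  refine ⟨?_, ?_, ?_⟩ <;> simp
  · positivity
  · positivity
  · nlinarith

/-- Duffy transform. Coordinates are `(y, x)`. -/
lemma int_T (f : ℝ × ℝ → ℝ) (hf : Continuous f) :
    ∫ z in T, f z = ∫ y in (0:ℝ)..1, ∫ s in (0:ℝ)..1, (1 - y) * f (y, s * (1 - y)) := by
  have hint : Integrable (T.indicator f) (volume.prod volume) := by
    rw [← Measure.volume_eq_prod, integrable_indicator_iff T_closed.measurableSet]
    exact hf.continuousOn.integrableOn_compact T_compact
  rw [← integral_indicator T_closed.measurableSet, Measure.volume_eq_prod, integral_prod _ hint]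
  rw [intervalIntegral.integral_of_le zero_le_one, ← integral_Icc_eq_integral_Ioc,
    ← integral_indicator measurableSet_Icc]
  congr 1
  ext y
  by_cases hy : y ∈ Set.Icc (0:ℝ) 1
  · rw [Set.indicator_of_mem hy, intervalIntegral.integral_const_mul,
      intervalIntegral.mul_integral_comp_mul_right (f := fun x => f (y, x))]
    rw [zero_mul, one_mul, intervalIntegral.integral_of_le (by linarith [hy.2]),
      ← integral_Icc_eq_integral_Ioc, ← integral_indicator measurableSet_Icc]
    congr 1
    ext x
    have : (y, x) ∈ T ↔ x ∈ Set.Icc 0 (1 - y) := by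
      constructor
      · rintro ⟨h1, h2, h3⟩
        exact ⟨h2, by simp only at h3; linarith⟩
      · rintro ⟨h1, h2⟩
        exact ⟨hy.1, h1, by simp only; linarith⟩
    by_cases hx : x ∈ Set.Icc 0 (1 - y)
    · rw [Set.indicator_of_mem hx, Set.indicator_of_mem (this.2 hx)]
    · rw [Set.indicator_of_notMem hx, Set.indicator_of_notMem (fun h => hx (this.1 h))]
  · rw [Set.indicator_of_notMem hy]
    have : ∀ x, T.indicator f (y, x) = 0 := by
      intro x
      apply Set.indicator_of_notMem
      rintro ⟨h1, h2, h3⟩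
      simp only at h1 h2 h3
      exact hy ⟨h1, by linarith⟩
    simp [this]

abbrev E2 := EuclideanSpace ℝ (Fin 2)

lemma hull (A B C : E2) :
    convexHull ℝ ({A, B, C} : Set E2) =
      (fun z : ℝ × ℝ => A + (z.1 • (C - A) + z.2 • (B - A))) '' T := by
  apply Set.Subset.antisymm
  · apply convexHull_min
    · rintro x (rfl | rfl | rfl)
      · exact ⟨(0, 0), by simp [T], by simp⟩
      · exact ⟨(0, 1), by simp [T], by simp⟩
      · exact ⟨(1, 0), by simp [T], by simp⟩
    · rintro _ ⟨z, hz, rfl⟩ _ ⟨w, hw, rfl⟩ s t hs ht hst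
      refine ⟨s • z + t • w, T_convex hz hw hs ht hst, ?_⟩
      have : t = 1 - s := by linarith
      subst this
      simp only [Prod.fst_add, Prod.snd_add, Prod.smul_fst, Prod.smul_snd, smul_eq_mul]
      module
  · rintro _ ⟨⟨y, x⟩, ⟨h1, h2, h3⟩, rfl⟩
    simp only at h1 h2 h3
    have hc := convex_convexHull ℝ ({A, B, C} : Set E2)
    have hA : A ∈ convexHull ℝ ({A, B, C} : Set E2) := subset_convexHull _ _ (by simp)
    have hB : B ∈ convexHull ℝ ({A, B, C} : Set E2) := subset_convexHull _ _ (by simp)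
    have hC : C ∈ convexHull ℝ ({A, B, C} : Set E2) := subset_convexHull _ _ (by simp)
    have := hc.sum_mem (t := Finset.univ) (w := ![1 - x - y, x, y]) (z := ![A, B, C])
      (by intro i _; fin_cases i <;> simp <;> linarith)
      (by simp [Fin.sum_univ_three]; ring)
      (by intro i _; fin_cases i <;> simp [hA, hB, hC])
    convert this using 1
    simp [Fin.sum_univ_three]
    module

lemma exists_equiv (A B C : E2) (h : AffineIndependent ℝ ![A, B, C]) :
    ∃ L : (ℝ × ℝ) ≃L[ℝ] E2, ∀ z, L z = z.1 • (C - A) + z.2 • (B - A) := by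
  let f : (ℝ × ℝ) →ₗ[ℝ] E2 :=
    (LinearMap.fst ℝ ℝ ℝ).smulRight (C - A) + (LinearMap.snd ℝ ℝ ℝ).smulRight (B - A)
  have hf : ∀ z, f z = z.1 • (C - A) + z.2 • (B - A) := fun z => rfl
  have hinj : Function.Injective f := by
    rw [← LinearMap.ker_eq_bot, LinearMap.ker_eq_bot']
    rintro ⟨y, x⟩ hz
    rw [hf] at hz
    simp only at hz
    rw [affineIndependent_iff] at h
    have := h Finset.univ ![- x - y, x, y] (by simp [Fin.sum_univ_three]; ring)
      (by simp [Fin.sum_univ_three]; rw [← hz]; module)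
    have h1 := this 1 (by simp)
    have h2 := this 2 (by simp)
    simp at h1 h2
    simp [h1, h2]
  let g := LinearEquiv.ofInjectiveOfFinrankEq f hinj (by simp)
  refine ⟨g.toContinuousLinearEquiv, fun z => ?_⟩
  rw [← hf]
  rfl

lemma int_K (A B C : E2) (h : AffineIndependent ℝ ![A, B, C]) :
    ∃ c : ℝ, c ≠ 0 ∧ 0 ≤ c ∧ ∀ g : E2 → ℝ, Continuous g →
      ∫ x in convexHull ℝ ({A, B, C} : Set E2), g x =
        c * ∫ y in (0:ℝ)..1, ∫ s in (0:ℝ)..1,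
          (1 - y) * g (A + (y • (C - A) + (s * (1 - y)) • (B - A))) := by
  obtain ⟨L, hL⟩ := exists_equiv A B C h
  let ν : Measure E2 := Measure.map L volume
  have hν : ν.IsAddHaarMeasure := by
    exact L.isAddHaarMeasure_map volume
  have hvol := Measure.isAddLeftInvariant_eq_smul (volume : Measure E2) ν
  set c := Measure.addHaarScalarFactor (volume : Measure E2) ν
  let Ψ : (ℝ × ℝ) ≃ₜ E2 := L.toHomeomorph.trans (Homeomorph.addLeft A)
  have hΨ : ∀ z, Ψ z = A + (z.1 • (C - A) + z.2 • (B - A)) := fun z => by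
    rw [← hL]; rfl
  have hmp : MeasurePreserving Ψ volume ν := by
    have h1 : MeasurePreserving L volume ν := ⟨L.continuous.measurable, rfl⟩
    exact (measurePreserving_add_left ν A).comp h1
  have hK : convexHull ℝ ({A, B, C} : Set E2) = Ψ '' T := by
    rw [hull]; congr 1; ext1 z; rw [hΨ]
  refine ⟨c, ?_, c.2, ?_⟩
  · intro hc
    have hc' : c = 0 := by exact_mod_cast hc
    rw [hc', zero_smul] at hvol
    exact (NeZero.ne (volume : Measure E2)) hvol
  · intro g hg
    rw [hvol, Measure.restrict_smul, integral_smul_nnreal_measure, hK]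
    rw [hmp.setIntegral_image_emb Ψ.measurableEmbedding, int_T (fun z => g (Ψ z)) (hg.comp Ψ.continuous)]
    simp only [hΨ]
    rfl


lemma slice (p : ℕ) (q : MvPolynomial (Fin 2) ℝ) (hq : q.totalDegree ≤ p) (A V W : E2) (s : ℝ) :
    (MvPolynomial.eval (fun i => (A + s • W) i) q) ^ 2 ≤ ((p:ℝ) + 1) * (p + 2) *
      ∫ y in (0:ℝ)..1, (1 - y) *
        (MvPolynomial.eval (fun i => (A + (y • V + (s * (1 - y)) • W)) i) q) ^ 2 := by
  let F : Fin 2 → Polynomial ℝ := fun i =>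
    Polynomial.C (V i - s * W i) * Polynomial.X + Polynomial.C (A i + s * W i)
  let r : Polynomial ℝ := MvPolynomial.aeval F q
  have hr : r.natDegree ≤ p := by
    have := MvPolynomial.aeval_natDegree_le (n := 1) q hq F
      (fun i => Polynomial.natDegree_linear_le)
    simpa using this
  have he : ∀ y, r.eval y =
      MvPolynomial.eval (fun i => (A + (y • V + (s * (1 - y)) • W)) i) q := by
    intro y
    have h1 : r.eval y = MvPolynomial.aeval (fun i => (F i).eval y) q := by
      have := MvPolynomial.map_aeval F (Polynomial.evalRingHom y) q
      have h2 : (Polynomial.evalRingHom y).comp (algebraMap ℝ (Polynomial ℝ)) = RingHom.id ℝ := by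
        ext x; simp
      rw [h2] at this
      exact this
    rw [h1, MvPolynomial.aeval_eq_eval]
    have h3 : (fun i => (F i).eval y) = (fun i => (A + (y • V + (s * (1 - y)) • W)) i) := by
      ext i
      simp [F]
      ring
    rw [h3]
  have := one_dim p r hr
  simp only [he] at this
  simpa using this

end TraceInv

/-- Trace inverse estimate on a triangle (`d = 2` case): for a nondegenerate triangle `K` with
vertices `A, B, C` in the Euclidean plane, edge `e` from `A` to `B` of length `|e| = dist A B`,
and area `|K|`, every bivariate polynomial `q` of total degree at most `p` satisfies
`∫_e q² ds ≤ ((p+1)(p+2)/2) (|e|/|K|) ∫_K q² dA`, where the edge integral is expressed via the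
parametrization `t ↦ A + t (B - A)`, `t ∈ [0,1]`, as `|e| ∫_0^1 q(A + t(B-A))² dt`. -/
theorem trace_inverse_estimate_triangle
    (A B C : EuclideanSpace ℝ (Fin 2)) (hABC : AffineIndependent ℝ ![A, B, C])
    (p : ℕ) (q : MvPolynomial (Fin 2) ℝ) (hq : q.totalDegree ≤ p) :
    dist A B * ∫ t in (0 : ℝ)..1,
        (MvPolynomial.eval (fun i => (A + t • (B - A)) i) q) ^ 2 ≤
      (((p : ℝ) + 1) * ((p : ℝ) + 2) / 2) *
        (dist A B /
          (volume (convexHull ℝ ({A, B, C} : Set (EuclideanSpace ℝ (Fin 2))))).toReal) *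
        ∫ x in convexHull ℝ ({A, B, C} : Set (EuclideanSpace ℝ (Fin 2))),
          (MvPolynomial.eval (fun i => x i) q) ^ 2 := by
  classical
  obtain ⟨c, hc0, hc, hK⟩ := TraceInv.int_K A B C hABC
  have hcpos : 0 < c := lt_of_le_of_ne hc (Ne.symm hc0)
  have hqc : Continuous (fun x : EuclideanSpace ℝ (Fin 2) => MvPolynomial.eval (fun i => x i) q) :=
    (MvPolynomial.continuous_eval q).comp (by fun_prop)
  have hvol : (volume (convexHull ℝ ({A, B, C} : Set (EuclideanSpace ℝ (Fin 2))))).toReal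
      = c / 2 := by
    have h1 := hK (fun _ => 1) continuous_const
    simp only [setIntegral_const, smul_eq_mul, mul_one, intervalIntegral.integral_const,
      sub_zero, one_mul] at h1
    have h2 : ∫ y in (0:ℝ)..1, (1 - y) = 1 / 2 := by
      rw [intervalIntegral.integral_sub (by simp) (by simp)]
      simp
      norm_num
    rw [h2] at h1
    rw [← Measure.real, h1]
    ring
  rw [hvol, hK (fun x => (MvPolynomial.eval (fun i => x i) q) ^ 2) (hqc.pow 2)]
  have hcont : Continuous (fun z : ℝ × ℝ => (1 - z.1) *
      (MvPolynomial.eval (fun i => (A + (z.1 • (C - A) + (z.2 * (1 - z.1)) • (B - A))) i) q) ^ 2) :=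
    (by fun_prop : Continuous (fun z : ℝ × ℝ => 1 - z.1)).mul
      ((hqc.comp (by fun_prop : Continuous (fun z : ℝ × ℝ =>
        A + (z.1 • (C - A) + (z.2 * (1 - z.1)) • (B - A))))).pow 2)
  rw [intervalIntegral_intervalIntegral_swap (F := fun y s => (1 - y) *
      (MvPolynomial.eval (fun i => (A + (y • (C - A) + (s * (1 - y)) • (B - A))) i) q) ^ 2)]
  swap
  · refine (hcont.continuousOn.integrableOn_compact
      (isCompact_uIcc.prod isCompact_uIcc)).mono_set
      (Set.prod_mono Set.uIoc_subset_uIcc Set.uIoc_subset_uIcc)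
  have key : ∫ t in (0 : ℝ)..1, (MvPolynomial.eval (fun i => (A + t • (B - A)) i) q) ^ 2 ≤
      ∫ s in (0:ℝ)..1, ((p:ℝ) + 1) * (p + 2) * ∫ y in (0:ℝ)..1, (1 - y) *
        (MvPolynomial.eval (fun i => (A + (y • (C - A) + (s * (1 - y)) • (B - A))) i) q) ^ 2 := by
    apply intervalIntegral.integral_mono_on zero_le_one
    · exact (((hqc.comp (by fun_prop : Continuous (fun t : ℝ =>
        A + t • (B - A)))).pow 2)).intervalIntegrable _ _
    · apply Continuous.intervalIntegrable
      apply Continuous.mul continuous_const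
      exact intervalIntegral.continuous_parametric_intervalIntegral_of_continuous'
        (f := fun s y => (1 - y) *
        (MvPolynomial.eval (fun i => (A + (y • (C - A) + (s * (1 - y)) • (B - A))) i) q) ^ 2)
        (hcont.comp continuous_swap) _ _
    · intro s _
      exact TraceInv.slice p q hq A (C - A) (B - A) s
  rw [intervalIntegral.integral_const_mul] at key
  refine (mul_le_mul_of_nonneg_left key dist_nonneg).trans (le_of_eq ?_)
  field_simp
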